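/- arXiv:1101.4522 — 4 statements merged into one kernel-verified Lean document; each statement's English description precedes it below -/
import Mathlib

section
/- For all integers d ≥ 2 and n ≥ 1 and every unit vector ψ in the range of (P_2^{(d)})^{⊗n} ⊆ (ℂ^d ⊗ ℂ^d)^{⊗n}, the reduced density operator ψ_{A^n} := tr_{B^n} |ψ⟩⟨ψ| obtained by tracing out the n second tensor factors satisfies tr(ψ_{A^n}²) ≤ (3/4)^n. -/
open scoped BigOperators
open Classical
open scoped ComplexOrder

noncomputable section

/-- Partial trace over the second tensor factor:
`(ptraceSnd M) a a' = ∑ b, M (a,b) (a',b)`. -/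
def ptraceSnd {α β : Type*} [Fintype β] (M : Matrix (α × β) (α × β) ℂ) : Matrix α α ℂ :=
  Matrix.of fun a a' => ∑ b : β, M (a, b) (a', b)

/-- Von Neumann entropy (in bits) of a matrix, via the eigenvalues of a Hermitian matrix
(with the convention `0 * log₂ 0 = 0`, automatic since `Real.logb 2 0 = 0`). -/
def vnEntropy {ι : Type*} [Fintype ι] [DecidableEq ι] (ρ : Matrix ι ι ℂ) : ℝ :=
  if h : ρ.IsHermitian then -∑ i, h.eigenvalues i * Real.logb 2 (h.eigenvalues i) else 0

/-- Entanglement of formation of a bipartite (density) matrix: the infimum of the average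
entropy of entanglement over all finite pure-state ensembles for `ρ`. -/
def EoF {α β : Type*} [Fintype α] [DecidableEq α] [Fintype β] [DecidableEq β]
    (ρ : Matrix (α × β) (α × β) ℂ) : ℝ :=
  sInf {E : ℝ | ∃ (k : ℕ) (p : Fin k → ℝ) (ψ : Fin k → (α × β → ℂ)),
    (∀ i, 0 ≤ p i) ∧ (∑ i, p i = 1) ∧
    (∀ i, ∑ x, Complex.normSq (ψ i x) = 1) ∧
    (∑ i, p i • Matrix.vecMulVec (ψ i) (star (ψ i)) = ρ) ∧
    E = ∑ i, p i * vnEntropy (ptraceSnd (Matrix.vecMulVec (ψ i) (star (ψ i))))}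

/-- The antisymmetric projector `P₂^{(d)} = (1/2)(𝟙 - F)` on `ℂ^d ⊗ ℂ^d`. -/
def asymProj (d : ℕ) : Matrix (Fin d × Fin d) (Fin d × Fin d) ℂ :=
  Matrix.of fun p q => (1 / 2 : ℂ) *
    ((if p.1 = q.1 ∧ p.2 = q.2 then 1 else 0) - (if p.1 = q.2 ∧ p.2 = q.1 then 1 else 0))

/-- The antisymmetric state `α_d = P₂^{(d)} / binom(d,2)`. -/
def antisymState (d : ℕ) : Matrix (Fin d × Fin d) (Fin d × Fin d) ℂ :=
  (1 / (Nat.choose d 2 : ℂ)) • asymProj d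

/-- `α_d^{⊗n}`, viewed as a bipartite state on `((ℂ^d)^{⊗n})_A ⊗ ((ℂ^d)^{⊗n})_B`
(the `n` first tensor factors grouped on the `A` side, the `n` second ones on the `B` side). -/
def alphaPow (d n : ℕ) :
    Matrix ((Fin n → Fin d) × (Fin n → Fin d)) ((Fin n → Fin d) × (Fin n → Fin d)) ℂ :=
  Matrix.of fun p q => ∏ i : Fin n, antisymState d (p.1 i, p.2 i) (q.1 i, q.2 i)

/-- `(P₂^{(d)})^{⊗n}`, viewed as an operator on `((ℂ^d)^{⊗n})_A ⊗ ((ℂ^d)^{⊗n})_B`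
(the `n` first tensor factors grouped on the `A` side, the `n` second ones on the `B` side). -/
def asymPow (d n : ℕ) :
    Matrix ((Fin n → Fin d) × (Fin n → Fin d)) ((Fin n → Fin d) × (Fin n → Fin d)) ℂ :=
  Matrix.of fun p q => ∏ i : Fin n, asymProj d (p.1 i, p.2 i) (q.1 i, q.2 i)

/-- The antisymmetrizer `P_k^{(d)} = (1/k!) ∑_{σ ∈ S_k} sgn(σ) U_σ` on `(ℂ^d)^{⊗k}`. -/
def asymProjK (d k : ℕ) : Matrix (Fin k → Fin d) (Fin k → Fin d) ℂ :=
  Matrix.of fun f g => (1 / (Nat.factorial k) : ℂ) *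
    ∑ σ : Equiv.Perm (Fin k), ((Equiv.Perm.sign σ : ℤ) : ℂ) * (if f = g ∘ σ then 1 else 0)

/-- Quantum conditional mutual information `I(A;B|E) = H(AE) + H(BE) - H(ABE) - H(E)`
(in bits) of a tripartite (density) matrix. -/
def condMutInfo {α β γ : Type*} [Fintype α] [DecidableEq α] [Fintype β] [DecidableEq β]
    [Fintype γ] [DecidableEq γ] (ρ : Matrix ((α × β) × γ) ((α × β) × γ) ℂ) : ℝ :=
  vnEntropy (Matrix.of fun p q : α × γ => ∑ b : β, ρ ((p.1, b), p.2) ((q.1, b), q.2))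
  + vnEntropy (Matrix.of fun p q : β × γ => ∑ a : α, ρ ((a, p.1), p.2) ((a, q.1), q.2))
  - vnEntropy ρ
  - vnEntropy (Matrix.of fun e e' : γ => ∑ a : α, ∑ b : β, ρ ((a, b), e) ((a, b), e'))

/-- Squashed entanglement: `E_sq(ρ_AB) = inf (1/2) I(A;B|E)` over all finite-dimensional
extensions `ρ_ABE` of `ρ_AB`. -/
def Esq {α β : Type*} [Fintype α] [DecidableEq α] [Fintype β] [DecidableEq β]
    (ρ : Matrix (α × β) (α × β) ℂ) : ℝ :=
  sInf {x : ℝ | ∃ (m : ℕ) (σ : Matrix ((α × β) × Fin m) ((α × β) × Fin m) ℂ),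
    σ.PosSemidef ∧ σ.trace = 1 ∧ ptraceSnd σ = ρ ∧ x = (1 / 2) * condMutInfo σ}

/-- The operator norm `‖·‖_∞` of a matrix, acting on Euclidean space. -/
def opNorm {ι : Type*} [Fintype ι] [DecidableEq ι] (M : Matrix ι ι ℂ) : ℝ :=
  ‖Matrix.toEuclideanCLM (𝕜 := ℂ) M‖

/-- A bipartite (density) matrix is separable if it is a finite convex combination of
product density matrices. -/
def IsSeparableMat {α β : Type*} [Fintype α] [Fintype β]
    (σ : Matrix (α × β) (α × β) ℂ) : Prop :=
  ∃ (k : ℕ) (p : Fin k → ℝ) (ρA : Fin k → Matrix α α ℂ) (ρB : Fin k → Matrix β β ℂ),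
    (∀ i, 0 ≤ p i) ∧ (∑ i, p i = 1) ∧
    (∀ i, (ρA i).PosSemidef) ∧ (∀ i, (ρA i).trace = 1) ∧
    (∀ i, (ρB i).PosSemidef) ∧ (∀ i, (ρB i).trace = 1) ∧
    σ = ∑ i, p i • Matrix.kroneckerMap (· * ·) (ρA i) (ρB i)

/-!
Give every site three tensor factors, and let `q` and `a` exchange the last two and the first two
of them. On the range of `Q = (1 - q) / 2` the braid relation `aqa = qaq` makes
`B = Q (1 + 4a) Q / 3` a Hermitian involution, so `⟨v, B^{⊗n} v⟩ ≤ ‖v‖²` for `v = φ ⊗ ψ`, where `φ`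
is an arbitrary vector on the first factors and `ψ` is antisymmetric at every site. Since `Q^{⊗n}`
fixes `v`, the left-hand side is `⟨v, ((1 + 4a) / 3)^{⊗n} v⟩`, whose expansion over subsets `S` of
sites has coefficients `(4/3)^|S| (1/3)^(n - |S|)`. The expectation of the partial swap at `S` in a
product vector is a sum of squared moduli, so only the full swap need be kept, and its expectation
is `⟨φ, ψ_A φ⟩`. Hence `‖ψ_A‖ ≤ (3/4)^n ‖ψ‖²` in operator norm, which bounds the overlap of `ψ_A`
with the reduction of any vector, in particular with itself.
-/

open scoped Matrix Kronecker

section BraidInvolutions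

variable (K : Type*) {R : Type*} [Field K] [Ring R] [Algebra K R]

/-- The projection `(1 - q) / 2` onto the `-1`-eigenspace of an involution `q`. -/
def negEigenproj (q : R) : R :=
  (1 / 2 : K) • (1 - q)

/-- The compression of `(1 + 4a) / 3` by the projection `Q` onto the `-1`-eigenspace of `q`. For
involutions satisfying the braid relation, `QaQ` has eigenvalues `-1` and `1 / 2` on the range of
`Q`; the coefficients are chosen to send these to `-1` and `1`. -/
def braidReflection (a q : R) : R :=
  negEigenproj K q * ((1 / 3 : K) • 1 + (4 / 3 : K) • a) * negEigenproj K q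

variable {K} {a q : R}

lemma mul_negEigenproj (hq : q * q = 1) : q * negEigenproj K q = -negEigenproj K q := by
  rw [negEigenproj, mul_smul_comm, mul_sub, mul_one, hq, ← smul_neg, neg_sub]

lemma negEigenproj_mul (hq : q * q = 1) : negEigenproj K q * q = -negEigenproj K q := by
  rw [negEigenproj, smul_mul_assoc, sub_mul, one_mul, hq, ← smul_neg, neg_sub]

variable [CharZero K]

lemma negEigenproj_mul_self (hq : q * q = 1) :
    negEigenproj K q * negEigenproj K q = negEigenproj K q := by
  simp only [negEigenproj, smul_mul_smul_comm, mul_sub, sub_mul, mul_one, one_mul, hq]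
  module

lemma compression_negEigenproj_mul_self (ha : a * a = 1) (hq : q * q = 1)
    (hbraid : a * q * a = q * a * q) :
    negEigenproj K q * a * negEigenproj K q * (negEigenproj K q * a * negEigenproj K q) =
      (1 / 2 : K) • (negEigenproj K q - negEigenproj K q * a * negEigenproj K q) := by
  have hQQ := negEigenproj_mul_self (K := K) hq
  have hQq := negEigenproj_mul (K := K) hq
  have hqQ := mul_negEigenproj (K := K) hq
  set Q := negEigenproj K q with hQ
  have haQa : a * Q * a = (1 / 2 : K) • (1 - q * a * q) := by
    rw [hQ, negEigenproj, mul_smul_comm, smul_mul_assoc, mul_sub, sub_mul, mul_one, ha, hbraid]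
  calc Q * a * Q * (Q * a * Q) = Q * (a * (Q * Q) * a) * Q := by simp only [mul_assoc]
    _ = (1 / 2 : K) • (Q * Q - Q * q * a * (q * Q)) := by
      rw [hQQ, haQa, mul_smul_comm, smul_mul_assoc, mul_sub, sub_mul, mul_one, hQQ]
      simp only [mul_assoc]
    _ = (1 / 2 : K) • (Q - Q * a * Q) := by
      rw [hQQ, hQq, hqQ, mul_neg, neg_mul, neg_mul, neg_neg]

lemma braidReflection_mul_self (ha : a * a = 1) (hq : q * q = 1)
    (hbraid : a * q * a = q * a * q) :
    braidReflection K a q * braidReflection K a q = negEigenproj K q := by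
  have hXX := compression_negEigenproj_mul_self (K := K) ha hq hbraid
  have hQQ := negEigenproj_mul_self (K := K) hq
  rw [braidReflection]
  set Q := negEigenproj K q
  have hB : Q * ((1 / 3 : K) • 1 + (4 / 3 : K) • a) * Q =
      (1 / 3 : K) • Q + (4 / 3 : K) • (Q * a * Q) := by
    simp only [mul_add, add_mul, mul_smul_comm, smul_mul_assoc, mul_one, hQQ]
  have hQX : Q * (Q * a * Q) = Q * a * Q := by simp only [← mul_assoc, hQQ]
  have hXQ : Q * a * Q * Q = Q * a * Q := by rw [mul_assoc, hQQ]
  rw [hB]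
  generalize Q * a * Q = X at *
  simp only [mul_add, add_mul, smul_mul_smul_comm, hQQ, hQX, hXQ, hXX]
  module

end BraidInvolutions

section QuadraticForm

variable {κ : Type*} [Fintype κ]

lemma star_dotProduct_self_eq_sum_normSq (v : κ → ℂ) :
    star v ⬝ᵥ v = ((∑ x, Complex.normSq (v x) : ℝ) : ℂ) := by
  simp [dotProduct, Complex.normSq_eq_conj_mul_self]

lemma re_star_dotProduct_mulVec_le {M : Matrix κ κ ℂ} (hM : M.IsHermitian) {v : κ → ℂ}
    (hv : M *ᵥ (M *ᵥ v) = v) :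
    (star v ⬝ᵥ (M *ᵥ v)).re ≤ ∑ x, Complex.normSq (v x) := by
  have hsymm (u : κ → ℂ) : star (M *ᵥ v) ⬝ᵥ u = star v ⬝ᵥ (M *ᵥ u) := by
    rw [Matrix.star_mulVec, hM.eq, Matrix.dotProduct_mulVec]
  have hnonneg := (Complex.le_def.1 (dotProduct_star_self_nonneg (v - M *ᵥ v))).1
  simp only [star_sub, sub_dotProduct, dotProduct_sub, hsymm, hv,
    star_dotProduct_self_eq_sum_normSq, Complex.sub_re, Complex.ofReal_re, Complex.zero_re]
    at hnonneg
  linarith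

end QuadraticForm

section TensorPower

variable {ι κ κ' R : Type*}

/-- The tensor power `M^{⊗ι}`: the index `x : ι → κ` stands for the basis vector `⨂ i, e (x i)`. -/
def tensorPow [CommSemiring R] (ι : Type*) [Fintype ι] (M : Matrix κ κ R) :
    Matrix (ι → κ) (ι → κ) R :=
  Matrix.of fun x y => ∏ i, M (x i) (y i)

lemma tensorPow_mul [CommSemiring R] [Fintype ι] [DecidableEq ι] [Fintype κ] (M N : Matrix κ κ R) :
    tensorPow ι (M * N) = tensorPow ι M * tensorPow ι N := by
  ext x y
  simp only [tensorPow, Matrix.of_apply, Matrix.mul_apply, Fintype.prod_sum,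
    Finset.prod_mul_distrib]

lemma isHermitian_tensorPow [CommSemiring R] [StarRing R] [Fintype ι] {M : Matrix κ κ R}
    (hM : M.IsHermitian) : (tensorPow ι M).IsHermitian := by
  ext x y
  simp only [tensorPow, Matrix.conjTranspose_apply, Matrix.of_apply, star_prod, hM.apply]

lemma tensorPow_one [CommSemiring R] [Fintype ι] [DecidableEq κ] :
    tensorPow ι (1 : Matrix κ κ R) = 1 := by
  ext x y
  simp [tensorPow, Matrix.one_apply, Finset.prod_ite_zero, funext_iff]

/-- The product vector `f ⊗ g`, with the two tensor factors at each site grouped together. -/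
def tensorVec [Mul R] (f : (ι → κ) → R) (g : (ι → κ') → R) (x : ι → κ × κ') : R :=
  f (fun i => (x i).1) * g (fun i => (x i).2)

/-- The permutation of configurations that applies `σ` at the sites in `S`. -/
def permOn [DecidableEq ι] (σ : Equiv.Perm κ) (S : Finset ι) : Equiv.Perm (ι → κ) :=
  Equiv.piCongrRight fun i => if i ∈ S then σ else 1

lemma permOn_apply [DecidableEq ι] (σ : Equiv.Perm κ) (S : Finset ι) (x : ι → κ) :
    permOn σ S x = S.piecewise (fun i => σ (x i)) x := by
  ext i
  by_cases hi : i ∈ S <;> simp [permOn, hi]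

variable [Fintype ι] [DecidableEq ι]

lemma sum_arrow_prod [Fintype κ] [Fintype κ'] [AddCommMonoid R] (F : (ι → κ × κ') → R) :
    ∑ x, F x = ∑ y : ι → κ, ∑ z : ι → κ', F fun i => (y i, z i) := by
  rw [← (Equiv.arrowProdEquivProdArrow ι (fun _ => κ) fun _ => κ').symm.sum_comp,
    Fintype.sum_prod_type]
  rfl

lemma tensorPow_kronecker_mulVec_tensorVec [CommSemiring R] [Fintype κ] [Fintype κ']
    (M : Matrix κ κ R) (N : Matrix κ' κ' R) (f : (ι → κ) → R) (g : (ι → κ') → R) :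
    tensorPow ι (M ⊗ₖ N) *ᵥ tensorVec f g =
      tensorVec (tensorPow ι M *ᵥ f) (tensorPow ι N *ᵥ g) := by
  ext x
  simp only [Matrix.mulVec, dotProduct, tensorVec, tensorPow, Matrix.of_apply,
    Matrix.kroneckerMap_apply, Finset.prod_mul_distrib, Finset.sum_mul_sum]
  rw [sum_arrow_prod]
  simp only [mul_mul_mul_comm]

lemma sum_normSq_tensorVec [Fintype κ] [Fintype κ'] (f : (ι → κ) → ℂ) (g : (ι → κ') → ℂ) :
    ∑ x, Complex.normSq (tensorVec f g x) =
      (∑ y, Complex.normSq (f y)) * ∑ z, Complex.normSq (g z) := by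
  simp only [sum_arrow_prod, tensorVec, map_mul, Finset.sum_mul_sum]

variable [DecidableEq κ] [CommSemiring R]

lemma permMatrix_permOn_apply (σ : Equiv.Perm κ) (S : Finset ι) (x y : ι → κ) :
    (permOn σ S).permMatrix R x y =
      (∏ i ∈ S, σ.permMatrix R (x i) (y i)) * ∏ i ∈ Sᶜ, (1 : Matrix κ κ R) (x i) (y i) := by
  have hpiecewise : permOn σ S x = y ↔ (∀ i ∈ S, σ (x i) = y i) ∧ ∀ i ∈ Sᶜ, x i = y i := by
    simp only [funext_iff, permOn_apply, Finset.piecewise, Finset.mem_compl]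
    grind
  simp only [Equiv.toPEquiv_apply, PEquiv.toMatrix_apply, Option.mem_some_iff, Matrix.one_apply,
    Finset.prod_ite_zero, Finset.prod_const_one, hpiecewise, ite_and, ite_mul, one_mul, zero_mul]

lemma tensorPow_smul_one_add_smul_permMatrix (s t : R) (σ : Equiv.Perm κ) :
    tensorPow ι (s • 1 + t • σ.permMatrix R) =
      ∑ S : Finset ι, (t ^ S.card * s ^ Sᶜ.card) • (permOn σ S).permMatrix R := by
  ext x y
  rw [add_comm]
  simp only [tensorPow, Matrix.of_apply, Matrix.add_apply, Matrix.smul_apply, smul_eq_mul,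
    Fintype.prod_add, Finset.prod_mul_distrib, Finset.prod_const, Matrix.sum_apply,
    permMatrix_permOn_apply, mul_mul_mul_comm]

end TensorPower
section Reflection

variable {ι κ : Type*} [DecidableEq κ]

lemma isHermitian_permMatrix_of_mul_self {σ : Equiv.Perm κ} (hσ : σ * σ = 1) :
    (σ.permMatrix ℂ).IsHermitian := by
  rw [Matrix.IsHermitian, Matrix.conjTranspose_permMatrix, inv_eq_of_mul_eq_one_left hσ]

variable [Fintype κ]

lemma isHermitian_negEigenproj {B : Matrix κ κ ℂ} (hB : B.IsHermitian) :
    (negEigenproj ℂ B).IsHermitian := by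
  simp [negEigenproj, Matrix.IsHermitian, hB.eq]

lemma isHermitian_braidReflection {A B : Matrix κ κ ℂ} (hA : A.IsHermitian) (hB : B.IsHermitian) :
    (braidReflection ℂ A B).IsHermitian := by
  simp [braidReflection, Matrix.IsHermitian, hA.eq, (isHermitian_negEigenproj hB).eq, mul_assoc]

variable [Fintype ι] [DecidableEq ι]

lemma star_dotProduct_tensorPow_braidReflection_mulVec (σ : Equiv.Perm κ) {B : Matrix κ κ ℂ}
    (hB : B.IsHermitian) {v : (ι → κ) → ℂ} (hv : tensorPow ι (negEigenproj ℂ B) *ᵥ v = v) :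
    star v ⬝ᵥ (tensorPow ι (braidReflection ℂ (σ.permMatrix ℂ) B) *ᵥ v) =
      ∑ S : Finset ι, (4 / 3 : ℂ) ^ S.card * (1 / 3) ^ Sᶜ.card * (star v ⬝ᵥ v ∘ permOn σ S) := by
  have hQv : star v ᵥ* tensorPow ι (negEigenproj ℂ B) = star v := by
    rw [← (isHermitian_tensorPow (isHermitian_negEigenproj hB)).eq, ← Matrix.star_mulVec, hv]
  rw [braidReflection, tensorPow_mul, tensorPow_mul, ← Matrix.mulVec_mulVec, hv,
    ← Matrix.mulVec_mulVec, Matrix.dotProduct_mulVec, hQv, tensorPow_smul_one_add_smul_permMatrix]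
  simp only [Matrix.sum_mulVec, Matrix.smul_mulVec, Matrix.permMatrix_mulVec, dotProduct_sum,
    dotProduct_smul, smul_eq_mul]

lemma sum_re_star_dotProduct_comp_permOn_le {σ τ : Equiv.Perm κ} (hσ : σ * σ = 1) (hτ : τ * τ = 1)
    (hbraid : σ * τ * σ = τ * σ * τ) {v : (ι → κ) → ℂ}
    (hv : tensorPow ι (negEigenproj ℂ (τ.permMatrix ℂ)) *ᵥ v = v) :
    ∑ S : Finset ι, (4 / 3 : ℝ) ^ S.card * (1 / 3) ^ Sᶜ.card * (star v ⬝ᵥ v ∘ permOn σ S).re ≤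
      ∑ x, Complex.normSq (v x) := by
  have hA : σ.permMatrix ℂ * σ.permMatrix ℂ = 1 := by
    rw [← Matrix.permMatrix_mul, hσ, Matrix.permMatrix_one]
  have hB : τ.permMatrix ℂ * τ.permMatrix ℂ = 1 := by
    rw [← Matrix.permMatrix_mul, hτ, Matrix.permMatrix_one]
  have hAB : σ.permMatrix ℂ * τ.permMatrix ℂ * σ.permMatrix ℂ =
      τ.permMatrix ℂ * σ.permMatrix ℂ * τ.permMatrix ℂ := by
    simp only [← Matrix.permMatrix_mul, ← mul_assoc, hbraid]
  have hτH := isHermitian_permMatrix_of_mul_self hτ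
  have hM := isHermitian_tensorPow (ι := ι)
    (isHermitian_braidReflection (isHermitian_permMatrix_of_mul_self hσ) hτH)
  have hMM : tensorPow ι (braidReflection ℂ (σ.permMatrix ℂ) (τ.permMatrix ℂ)) *ᵥ
      (tensorPow ι (braidReflection ℂ (σ.permMatrix ℂ) (τ.permMatrix ℂ)) *ᵥ v) = v := by
    rw [Matrix.mulVec_mulVec, ← tensorPow_mul, braidReflection_mul_self hA hB hAB, hv]
  have hle := re_star_dotProduct_mulVec_le hM hMM
  rw [star_dotProduct_tensorPow_braidReflection_mulVec σ hτH hv, Complex.re_sum] at hle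
  refine (Finset.sum_congr rfl fun S _ => ?_).trans_le hle
  rw [← Complex.re_ofReal_mul]
  push_cast
  rfl

end Reflection

section PartialSwap

lemma sum_sum_swap_fst_eq_sum_normSq {X Y : Type*} [Fintype X] [Fintype Y] (f g : X × Y → ℂ) :
    ∑ p, ∑ q, star (f p) * star (g q) * (f (q.1, p.2) * g (p.1, q.2)) =
      ((∑ y, ∑ y', Complex.normSq (∑ x, star (f (x, y)) * g (x, y')) : ℝ) : ℂ) := by
  push_cast
  simp only [← Complex.mul_conj, map_sum, Finset.sum_mul_sum, Fintype.sum_prod_type]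
  rw [Finset.sum_comm]
  refine Finset.sum_congr rfl fun y _ => ?_
  rw [Finset.sum_comm_cycle]
  refine Finset.sum_congr rfl fun y' _ => ?_
  refine Finset.sum_congr rfl fun x _ => Finset.sum_congr rfl fun x' _ => ?_
  simp only [map_mul, Complex.star_def, Complex.conj_conj]
  ring

lemma re_sum_sum_piecewise_nonneg {ι α : Type*} [Fintype ι] [DecidableEq ι] [Fintype α]
    (S : Finset ι) (f g : (ι → α) → ℂ) :
    0 ≤ (∑ a, ∑ b, star (f a) * star (g b) *
      (f (S.piecewise b a) * g (S.piecewise a b))).re := by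
  let e := Equiv.piEquivPiSubtypeProd (· ∈ S) fun _ => α
  have hpiecewise (p q) : S.piecewise (e.symm q) (e.symm p) = e.symm (q.1, p.2) := by
    ext i
    by_cases hi : i ∈ S <;> simp [e, Equiv.piEquivPiSubtypeProd, hi]
  have hsum := sum_sum_swap_fst_eq_sum_normSq (f ∘ e.symm) (g ∘ e.symm)
  simp_rw [← e.symm.sum_comp, hpiecewise]
  simp only [Function.comp_apply] at hsum
  rw [hsum, Complex.ofReal_re]
  exact Finset.sum_nonneg fun _ _ => Finset.sum_nonneg fun _ _ => Complex.normSq_nonneg _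

end PartialSwap

section Antisymmetric

variable (α : Type*)

/-- Exchange of the first two of three tensor factors. -/
def swapLeft : Equiv.Perm (α × α × α) where
  toFun x := (x.2.1, x.1, x.2.2)
  invFun x := (x.2.1, x.1, x.2.2)

/-- Exchange of the last two of three tensor factors. -/
def swapRight : Equiv.Perm (α × α × α) :=
  (Equiv.refl α).prodCongr (Equiv.prodComm α α)

lemma swapLeft_mul_self : swapLeft α * swapLeft α = 1 := rfl

lemma swapRight_mul_self : swapRight α * swapRight α = 1 := rfl

lemma swapLeft_swapRight_braid :
    swapLeft α * swapRight α * swapLeft α = swapRight α * swapLeft α * swapRight α := rfl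

section Projection

variable [Fintype α] [DecidableEq α]

/-- The projection of `ℂ^α ⊗ ℂ^α` onto its antisymmetric subspace. -/
def antisymProj : Matrix (α × α) (α × α) ℂ :=
  negEigenproj ℂ (Equiv.Perm.permMatrix ℂ (Equiv.prodComm α α))

lemma negEigenproj_swapRight :
    negEigenproj ℂ ((swapRight α).permMatrix ℂ) = (1 : Matrix α α ℂ) ⊗ₖ antisymProj α := by
  ext x y
  by_cases h : x.1 = y.1 <;>
    simp [negEigenproj, antisymProj, swapRight, Matrix.one_apply, Prod.ext_iff,
      PEquiv.toMatrix_apply, h]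

lemma asymProj_eq_antisymProj (d : ℕ) : asymProj d = antisymProj (Fin d) := by
  ext x y
  simp [asymProj, antisymProj, negEigenproj, Matrix.one_apply, Prod.ext_iff,
    PEquiv.toMatrix_apply, and_comm]

/-- The tensor power over `ι` of the antisymmetric projection, acting on
`(ℂ^α)^{⊗ι} ⊗ (ℂ^α)^{⊗ι}`: the first tensor factors of all sites come first. -/
def antisymPow (ι : Type*) [Fintype ι] :
    Matrix ((ι → α) × (ι → α)) ((ι → α) × (ι → α)) ℂ :=
  (tensorPow ι (antisymProj α)).submatrix (Equiv.arrowProdEquivProdArrow ι _ _).symm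
    (Equiv.arrowProdEquivProdArrow ι _ _).symm

lemma asymPow_eq_antisymPow (d n : ℕ) : asymPow d n = antisymPow (Fin d) (Fin n) := by
  ext x y
  simp [asymPow, antisymPow, tensorPow, asymProj_eq_antisymProj]

end Projection

section ThreeFactors

variable {α} {ι : Type*} [Fintype ι] [DecidableEq ι] [Fintype α]

/-- The vector `φ ⊗ ψ` on three tensor factors per site, the last two carrying `ψ`. -/
def tripleVec (φ : (ι → α) → ℂ) (ψ : (ι → α) × (ι → α) → ℂ) : (ι → α × α × α) → ℂ :=
  tensorVec φ (ψ ∘ Equiv.arrowProdEquivProdArrow ι _ _)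

lemma tensorPow_negEigenproj_mulVec_tripleVec [DecidableEq α] (φ : (ι → α) → ℂ)
    {ψ : (ι → α) × (ι → α) → ℂ} (hψ : antisymPow α ι *ᵥ ψ = ψ) :
    tensorPow ι (negEigenproj ℂ ((swapRight α).permMatrix ℂ)) *ᵥ tripleVec φ ψ =
      tripleVec φ ψ := by
  have hψ' : tensorPow ι (antisymProj α) *ᵥ (ψ ∘ Equiv.arrowProdEquivProdArrow ι _ _) =
      ψ ∘ Equiv.arrowProdEquivProdArrow ι _ _ := by
    conv_rhs => rw [← hψ, antisymPow, Matrix.submatrix_mulVec_equiv]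
    rw [Function.comp_assoc]
    simp
  rw [negEigenproj_swapRight, tripleVec, tensorPow_kronecker_mulVec_tensorVec, tensorPow_one,
    Matrix.one_mulVec, hψ']

lemma star_tripleVec_dotProduct_comp_permOn (S : Finset ι) (φ : (ι → α) → ℂ)
    (ψ : (ι → α) × (ι → α) → ℂ) :
    star (tripleVec φ ψ) ⬝ᵥ tripleVec φ ψ ∘ permOn (swapLeft α) S =
      ∑ c, ∑ a, ∑ b, star (φ a) * star (ψ (b, c)) *
        (φ (S.piecewise b a) * ψ (S.piecewise a b, c)) := by
  have hswap (a b c : ι → α) :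
      tripleVec φ ψ (permOn (swapLeft α) S fun i => (a i, b i, c i)) =
        φ (S.piecewise b a) * ψ (S.piecewise a b, c) := by
    have hperm : permOn (swapLeft α) S (fun i => (a i, b i, c i)) =
        fun i => (S.piecewise b a i, S.piecewise a b i, c i) := by
      ext i : 1
      by_cases hi : i ∈ S <;> simp [permOn_apply, swapLeft, hi]
    rw [hperm]
    rfl
  simp only [dotProduct, sum_arrow_prod, Pi.star_apply, Function.comp_apply, hswap]
  simp only [tripleVec, tensorVec, star_mul']
  rw [Finset.sum_comm_cycle]
  rfl

lemma re_star_tripleVec_dotProduct_comp_permOn_nonneg (S : Finset ι) (φ : (ι → α) → ℂ)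
    (ψ : (ι → α) × (ι → α) → ℂ) :
    0 ≤ (star (tripleVec φ ψ) ⬝ᵥ tripleVec φ ψ ∘ permOn (swapLeft α) S).re := by
  rw [star_tripleVec_dotProduct_comp_permOn, Complex.re_sum]
  exact Finset.sum_nonneg fun c _ => re_sum_sum_piecewise_nonneg S φ fun b => ψ (b, c)

lemma star_tripleVec_dotProduct_comp_permOn_univ (φ : (ι → α) → ℂ)
    (ψ : (ι → α) × (ι → α) → ℂ) :
    star (tripleVec φ ψ) ⬝ᵥ tripleVec φ ψ ∘ permOn (swapLeft α) Finset.univ =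
      star φ ⬝ᵥ (ptraceSnd (Matrix.vecMulVec ψ (star ψ)) *ᵥ φ) := by
  rw [star_tripleVec_dotProduct_comp_permOn]
  simp only [Finset.piecewise_univ, dotProduct, Matrix.mulVec, ptraceSnd, Matrix.of_apply,
    Matrix.vecMulVec_apply, Pi.star_apply, Finset.mul_sum, Finset.sum_mul]
  rw [← Finset.sum_comm_cycle]
  refine Finset.sum_congr rfl fun a _ => Finset.sum_congr rfl fun b _ =>
    Finset.sum_congr rfl fun c _ => ?_
  ring

lemma sum_normSq_tripleVec (φ : (ι → α) → ℂ) (ψ : (ι → α) × (ι → α) → ℂ) :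
    ∑ x, Complex.normSq (tripleVec φ ψ x) =
      (∑ a, Complex.normSq (φ a)) * ∑ x, Complex.normSq (ψ x) := by
  rw [tripleVec, sum_normSq_tensorVec]
  congr 1
  exact (Equiv.arrowProdEquivProdArrow ι _ _).sum_comp fun x => Complex.normSq (ψ x)

lemma re_star_dotProduct_ptraceSnd_mulVec_le [DecidableEq α] (φ : (ι → α) → ℂ)
    {ψ : (ι → α) × (ι → α) → ℂ} (hψ : antisymPow α ι *ᵥ ψ = ψ) :
    (star φ ⬝ᵥ (ptraceSnd (Matrix.vecMulVec ψ (star ψ)) *ᵥ φ)).re ≤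
      (3 / 4 : ℝ) ^ Fintype.card ι *
        ((∑ a, Complex.normSq (φ a)) * ∑ x, Complex.normSq (ψ x)) := by
  have hsum := sum_re_star_dotProduct_comp_permOn_le (swapLeft_mul_self α) (swapRight_mul_self α)
    (swapLeft_swapRight_braid α) (tensorPow_negEigenproj_mulVec_tripleVec φ hψ)
  have huniv := (Finset.single_le_sum (fun S _ => mul_nonneg (by positivity)
    (re_star_tripleVec_dotProduct_comp_permOn_nonneg S φ ψ))
    (Finset.mem_univ Finset.univ)).trans hsum
  rw [star_tripleVec_dotProduct_comp_permOn_univ, sum_normSq_tripleVec, Finset.compl_univ,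
    Finset.card_empty, pow_zero, mul_one, Finset.card_univ] at huniv
  have hpow : (3 / 4 : ℝ) ^ Fintype.card ι * (4 / 3) ^ Fintype.card ι = 1 := by
    rw [← mul_pow]
    norm_num
  calc _ = (3 / 4 : ℝ) ^ Fintype.card ι * ((4 / 3) ^ Fintype.card ι *
        (star φ ⬝ᵥ (ptraceSnd (Matrix.vecMulVec ψ (star ψ)) *ᵥ φ)).re) := by
        rw [← mul_assoc, hpow, one_mul]
    _ ≤ _ := mul_le_mul_of_nonneg_left huniv (by positivity)

end ThreeFactors

end Antisymmetric

lemma trace_ptraceSnd_vecMulVec_star_mul {κ β : Type*} [Fintype κ] [Fintype β]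
    (φ : κ × β → ℂ) (M : Matrix κ κ ℂ) :
    (ptraceSnd (Matrix.vecMulVec φ (star φ)) * M).trace =
      ∑ b, star (fun a => φ (a, b)) ⬝ᵥ (M *ᵥ fun a => φ (a, b)) := by
  simp only [Matrix.trace, Matrix.diag_apply, Matrix.mul_apply, ptraceSnd, Matrix.of_apply,
    Matrix.vecMulVec_apply, Pi.star_apply, dotProduct, Matrix.mulVec, Finset.sum_mul,
    Finset.mul_sum]
  rw [Finset.sum_comm_cycle]
  refine Finset.sum_congr rfl fun b _ => ?_
  rw [Finset.sum_comm]
  refine Finset.sum_congr rfl fun a' _ => Finset.sum_congr rfl fun a _ => ?_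
  ring

theorem purity_antisym_le_general {ι α β : Type*} [Fintype ι] [DecidableEq ι] [Fintype α]
    [DecidableEq α] [Fintype β] (φ : (ι → α) × β → ℂ) {ψ : (ι → α) × (ι → α) → ℂ}
    (hψ : antisymPow α ι *ᵥ ψ = ψ) :
    (ptraceSnd (Matrix.vecMulVec φ (star φ)) *
        ptraceSnd (Matrix.vecMulVec ψ (star ψ))).trace.re ≤
      (3 / 4 : ℝ) ^ Fintype.card ι *
        ((∑ x, Complex.normSq (φ x)) * ∑ x, Complex.normSq (ψ x)) := by
  rw [trace_ptraceSnd_vecMulVec_star_mul, Complex.re_sum, Fintype.sum_prod_type_right,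
    Finset.sum_mul, Finset.mul_sum]
  exact Finset.sum_le_sum fun b _ => re_star_dotProduct_ptraceSnd_mulVec_le _ hψ

/-- For all integers `d ≥ 2` and `n ≥ 1` and every unit vector `ψ` in the
range of `(P₂^{(d)})^{⊗n}`, the reduced state `ψ_{A^n} = tr_{B^n} |ψ⟩⟨ψ|` satisfies
`tr(ψ_{A^n}²) ≤ (3/4)^n`. -/
theorem purity_antisym_le (d n : ℕ) (hd : 2 ≤ d) (hn : 1 ≤ n)
    (ψ : (Fin n → Fin d) × (Fin n → Fin d) → ℂ)
    (hψ : ∑ v, Complex.normSq (ψ v) = 1)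
    (hrange : (asymPow d n).mulVec ψ = ψ) :
    (Matrix.trace (ptraceSnd (Matrix.vecMulVec ψ (star ψ)) *
        ptraceSnd (Matrix.vecMulVec ψ (star ψ)))).re ≤ (3 / 4 : ℝ) ^ n := by
  rw [asymPow_eq_antisymPow] at hrange
  simpa only [hψ, mul_one, Fintype.card_fin] using purity_antisym_le_general ψ hrange

end
end

section
/- For every integer n ≥ 1, the maximum of tr(ψ_{A^n}²) over all unit vectors ψ in the range of (P_2^{(3)})^{⊗n} ⊆ (ℂ³ ⊗ ℂ³)^{⊗n} equals 2^{−n}, where ψ_{A^n} := tr_{B^n} |ψ⟩⟨ψ| is obtained by tracing out the n second tensor factors. That is, tr(ψ_{A^n}²) ≤ 2^{−n} for all such unit vectors ψ, and there exists a unit vector ψ in the range of (P_2^{(3)})^{⊗n} achieving equality. -/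
open scoped BigOperators
open Classical
open scoped ComplexOrder

noncomputable section

/-!
The isometry `V : ℂ³ → ∧²ℂ³`, `V eₖ = (1/√2) ∑ ε_{abk} e_a ⊗ e_b`, parametrizes the range of
`(P₂⁽³⁾)^{⊗n}` by the vectors `V^{⊗n} c`. Tracing out the second factor of `V X Vᴴ` gives the
Werner–Holevo channel `W(X) = (tr X · 1 - Xᵀ) / 2`, which satisfies
`tr (W(X) W(Y)) = (tr X tr Y + tr (X Y)) / 4`. In the `n`-fold tensor power the two summands become
a sum over subsets `S` of the tensor factors: the purity of `V^{⊗n} c` is `4⁻ⁿ` times the sum over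
`S` of the overlap of `c ⊗ c` with the vector obtained from it by exchanging the two copies on `S`.
Each of the `2ⁿ` overlaps is at most `‖c‖⁴`, with equality when `c` is a standard basis vector.
-/

open Matrix

section ReducedMatrixUnit

variable {α β γ : Type*} [Fintype β]

/-- The purity `tr (ψ_A²)` of the reduced state of a bipartite vector `ψ`. -/
def purity [Fintype α] (ψ : α × β → ℂ) : ℂ :=
  trace (ptraceSnd (vecMulVec ψ (star ψ)) * ptraceSnd (vecMulVec ψ (star ψ)))

/-- The image of the matrix unit `|k⟩⟨l|` under the map `X ↦ tr_B (V X Vᴴ)`. -/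
def reducedMatrixUnit (V : Matrix (α × β) γ ℂ) (k l : γ) : Matrix α α ℂ :=
  ptraceSnd (vecMulVec (V.col k) (star (V.col l)))

lemma reducedMatrixUnit_apply (V : Matrix (α × β) γ ℂ) (k l : γ) (a a' : α) :
    reducedMatrixUnit V k l a a' = ∑ b, V (a, b) k * star (V (a', b) l) :=
  rfl

lemma trace_reducedMatrixUnit [Fintype α] (V : Matrix (α × β) γ ℂ) (k l : γ) :
    (reducedMatrixUnit V k l).trace = (Vᴴ * V) l k := by
  simp only [trace, diag_apply, reducedMatrixUnit_apply, mul_apply, conjTranspose_apply,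
    Fintype.sum_prod_type, mul_comm]

lemma ptraceSnd_vecMulVec_mulVec [Fintype γ] (V : Matrix (α × β) γ ℂ) (c : γ → ℂ) :
    ptraceSnd (vecMulVec (V *ᵥ c) (star (V *ᵥ c))) =
      ∑ p : γ × γ, (c p.1 * star (c p.2)) • reducedMatrixUnit V p.1 p.2 := by
  ext a a'
  simp only [ptraceSnd, of_apply, vecMulVec_apply, Pi.star_apply, mulVec, dotProduct, star_sum,
    star_mul', Finset.sum_mul_sum, Fintype.sum_prod_type, Matrix.sum_apply, Matrix.smul_apply,
    reducedMatrixUnit_apply, smul_eq_mul]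
  simp only [Finset.mul_sum]
  rw [Finset.sum_comm]
  refine Finset.sum_congr rfl fun k _ ↦ ?_
  rw [Finset.sum_comm]
  exact Finset.sum_congr rfl fun l _ ↦ Finset.sum_congr rfl fun b _ ↦ by ring

lemma purity_mulVec [Fintype α] [Fintype γ] (V : Matrix (α × β) γ ℂ) (c : γ → ℂ) :
    purity (V *ᵥ c) =
      ∑ p : γ × γ, ∑ q : γ × γ, (c p.1 * c p.2) * star (c q.1 * c q.2) *
        trace (reducedMatrixUnit V p.1 q.1 * reducedMatrixUnit V p.2 q.2) := by
  simp only [purity, ptraceSnd_vecMulVec_mulVec, Finset.sum_mul_sum, trace_sum,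
    smul_mul_smul_comm, trace_smul, smul_eq_mul, star_mul', Fintype.sum_prod_type]
  exact Finset.sum_congr rfl fun k _ ↦ Finset.sum_congr rfl fun k' _ ↦
    Finset.sum_congr rfl fun l _ ↦ Finset.sum_congr rfl fun l' _ ↦ by ring

end ReducedMatrixUnit

section TensorPower

variable (ι : Type*) {α β γ : Type*} [Fintype ι]

/-- The tensor power `V^{⊗ι}` of a matrix whose rows are bipartite, with the `A` indices and the
`B` indices of all factors grouped together. -/
def bipartitePow (V : Matrix (α × β) γ ℂ) : Matrix ((ι → α) × (ι → β)) (ι → γ) ℂ :=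
  of fun p k ↦ ∏ i, V (p.1 i, p.2 i) (k i)

variable {ι}

lemma bipartitePow_mul_conjTranspose_apply [DecidableEq ι] [Fintype γ] (V : Matrix (α × β) γ ℂ)
    (p q : (ι → α) × (ι → β)) :
    (bipartitePow ι V * (bipartitePow ι V)ᴴ) p q =
      ∏ i, (V * Vᴴ) (p.1 i, p.2 i) (q.1 i, q.2 i) := by
  simp only [mul_apply, conjTranspose_apply, Fintype.prod_sum, bipartitePow, of_apply, star_prod,
    Finset.prod_mul_distrib]

variable [DecidableEq ι] [Fintype β]

lemma reducedMatrixUnit_bipartitePow_apply (V : Matrix (α × β) γ ℂ) (k l : ι → γ) (a a' : ι → α) :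
    reducedMatrixUnit (bipartitePow ι V) k l a a' =
      ∏ i, reducedMatrixUnit V (k i) (l i) (a i) (a' i) := by
  simp only [reducedMatrixUnit_apply, Fintype.prod_sum, bipartitePow, of_apply, star_prod,
    Finset.prod_mul_distrib]

variable [Fintype α]

lemma trace_reducedMatrixUnit_bipartitePow_mul (V : Matrix (α × β) γ ℂ) (k l k' l' : ι → γ) :
    trace (reducedMatrixUnit (bipartitePow ι V) k l * reducedMatrixUnit (bipartitePow ι V) k' l') =
      ∏ i, trace (reducedMatrixUnit V (k i) (l i) * reducedMatrixUnit V (k' i) (l' i)) := by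
  simp only [trace, diag_apply, mul_apply, Fintype.prod_sum, reducedMatrixUnit_bipartitePow_apply,
    Finset.prod_mul_distrib]

lemma conjTranspose_bipartitePow_mul_self [DecidableEq γ] {V : Matrix (α × β) γ ℂ}
    (hV : Vᴴ * V = 1) : (bipartitePow ι V)ᴴ * bipartitePow ι V = 1 := by
  ext l k
  calc ((bipartitePow ι V)ᴴ * bipartitePow ι V) l k
    _ = ∏ i, (Vᴴ * V) (l i) (k i) := by
      simp only [← trace_reducedMatrixUnit, trace, diag_apply, Fintype.prod_sum,
        reducedMatrixUnit_bipartitePow_apply]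
    _ = (1 : Matrix (ι → γ) (ι → γ) ℂ) l k := by
      simp only [hV, one_apply, Fintype.prod_boole, funext_iff]

end TensorPower

lemma ofReal_sum_normSq {n : Type*} [Fintype n] (v : n → ℂ) :
    ((∑ i, Complex.normSq (v i) : ℝ) : ℂ) = star v ⬝ᵥ v := by
  simp [dotProduct, Complex.normSq_eq_conj_mul_self]

lemma sum_normSq_mulVec_of_conjTranspose_mul_self {m n : Type*} [Fintype m] [Fintype n]
    [DecidableEq n] {V : Matrix m n ℂ} (hV : Vᴴ * V = 1) (c : n → ℂ) :
    ∑ i, Complex.normSq ((V *ᵥ c) i) = ∑ j, Complex.normSq (c j) := by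
  apply Complex.ofReal_injective
  rw [ofReal_sum_normSq, ofReal_sum_normSq, star_mulVec, ← dotProduct_mulVec, mulVec_mulVec, hV,
    one_mulVec]

lemma trace_single_eq_ite {n R : Type*} [Fintype n] [DecidableEq n] [AddCommMonoid R] (i j : n)
    (c : R) : (single i j c).trace = if i = j then c else 0 := by
  split_ifs with h
  · rw [h, trace_single_eq_same]
  · exact trace_single_eq_of_ne _ _ _ h

section Antisymmetric

/-- The Levi-Civita symbol on `Fin 3`: `(a, b, k)` is an even permutation iff `b = a + 1` and
`k = a + 2` modulo `3`, and an odd one iff `b = a + 2` and `k = a + 1`. -/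
def leviCivita (a b k : Fin 3) : ℤ :=
  if b = a + 1 ∧ k = a + 2 then 1 else if b = a + 2 ∧ k = a + 1 then -1 else 0

lemma leviCivita_rotate (a b k : Fin 3) : leviCivita a b k = leviCivita k a b := by
  decide +revert

lemma sum_leviCivita_mul_leviCivita (a b a' b' : Fin 3) :
    ∑ k, leviCivita a b k * leviCivita a' b' k =
      (if a = a' ∧ b = b' then 1 else 0) - (if a = b' ∧ b = a' then 1 else 0) := by
  decide +kernel +revert

/-- The isometry `ℂ³ → ∧²ℂ³ ⊆ ℂ³ ⊗ ℂ³` sending `eₖ` to `(1/√2) ∑ ε_{abk} e_a ⊗ e_b`. -/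
def antisymIsometry : Matrix (Fin 3 × Fin 3) (Fin 3) ℂ :=
  of fun p k ↦ ((√2 : ℝ) : ℂ)⁻¹ * leviCivita p.1 p.2 k

lemma antisymIsometry_mul_star (p q : Fin 3 × Fin 3) (k l : Fin 3) :
    antisymIsometry p k * star (antisymIsometry q l) =
      1 / 2 * ((leviCivita p.1 p.2 k * leviCivita q.1 q.2 l : ℤ) : ℂ) := by
  have inv_sqrt_two_sq : ((√2 : ℝ) : ℂ)⁻¹ * ((√2 : ℝ) : ℂ)⁻¹ = 1 / 2 := by
    rw [← mul_inv, ← Complex.ofReal_mul, Real.mul_self_sqrt zero_le_two]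
    norm_num
  simp only [antisymIsometry, of_apply, star_mul', star_inv₀, star_intCast, Complex.star_def,
    Complex.conj_ofReal, ← inv_sqrt_two_sq]
  push_cast
  ring

lemma antisymIsometry_mul_conjTranspose :
    antisymIsometry * antisymIsometryᴴ = asymProj 3 := by
  ext p q
  simp only [mul_apply, conjTranspose_apply, antisymIsometry_mul_star, ← Finset.mul_sum,
    ← Int.cast_sum, sum_leviCivita_mul_leviCivita, asymProj, of_apply]
  push_cast
  rfl

/-- The Werner–Holevo channel `X ↦ (tr X · 1 - Xᵀ) / 2` on matrix units. -/
lemma reducedMatrixUnit_antisymIsometry (k l : Fin 3) :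
    reducedMatrixUnit antisymIsometry k l =
      (1 / 2 : ℂ) • ((if k = l then 1 else 0 : ℂ) • (1 : Matrix (Fin 3) (Fin 3) ℂ)
        - single l k 1) := by
  ext a a'
  simp only [reducedMatrixUnit_apply, antisymIsometry_mul_star, ← Finset.mul_sum, ← Int.cast_sum,
    leviCivita_rotate _ _ k, leviCivita_rotate _ _ l, sum_leviCivita_mul_leviCivita,
    Matrix.smul_apply, Matrix.sub_apply, one_apply, single_apply, smul_eq_mul, ite_and]
  push_cast
  simp only [ite_mul, one_mul, zero_mul, eq_comm (a := a)]
  split_ifs <;> simp_all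

lemma conjTranspose_antisymIsometry_mul_self : antisymIsometryᴴ * antisymIsometry = 1 := by
  ext l k
  rw [← trace_reducedMatrixUnit, reducedMatrixUnit_antisymIsometry, trace_smul, trace_sub,
    trace_smul, trace_one, Fintype.card_fin, trace_single_eq_ite, one_apply]
  simp only [eq_comm (a := k), smul_eq_mul, Nat.cast_ofNat]
  ring

lemma trace_reducedMatrixUnit_antisymIsometry_mul (k l k' l' : Fin 3) :
    trace (reducedMatrixUnit antisymIsometry k l * reducedMatrixUnit antisymIsometry k' l') =
      1 / 4 * ((if k' = l ∧ k = l' then 1 else 0) + (if k = l ∧ k' = l' then 1 else 0)) := by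
  simp only [reducedMatrixUnit_antisymIsometry, trace_smul, sub_mul, mul_sub, trace_sub,
    smul_mul_assoc, mul_smul_comm, one_mul, mul_one, trace_one, trace_single_mul,
    trace_single_eq_ite, single_apply, Fintype.card_fin, smul_eq_mul, Nat.cast_ofNat, ite_and]
  simp only [eq_comm (a := l), eq_comm (a := l')]
  split_ifs <;> norm_num

lemma asymPow_three_eq_mul_conjTranspose (n : ℕ) :
    asymPow 3 n =
      bipartitePow (Fin n) antisymIsometry * (bipartitePow (Fin n) antisymIsometry)ᴴ := by
  ext p q
  rw [bipartitePow_mul_conjTranspose_apply, antisymIsometry_mul_conjTranspose]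
  rfl

end Antisymmetric

section Exchange

variable {ι κ : Type*} [DecidableEq ι]

/-- The exchange of the two entries of a pair of families at the indices in `S`; as an operator on
two copies of a tensor power, it is the partial swap on the tensor factors in `S`. -/
def exchange (S : Finset ι) : Equiv.Perm ((ι → κ) × (ι → κ)) :=
  Function.Involutive.toPerm (fun p ↦ (S.piecewise p.2 p.1, S.piecewise p.1 p.2)) fun p ↦ by
    ext i <;> by_cases hi : i ∈ S <;> simp [hi]

lemma exchange_apply (S : Finset ι) (p : (ι → κ) × (ι → κ)) :
    exchange S p = (S.piecewise p.2 p.1, S.piecewise p.1 p.2) :=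
  rfl

lemma exchange_eq_iff (S : Finset ι) (p q : (ι → κ) × (ι → κ)) :
    exchange S p = q ↔
      (∀ i ∈ S, p.2 i = q.1 i ∧ p.1 i = q.2 i) ∧ ∀ i ∉ S, p.1 i = q.1 i ∧ p.2 i = q.2 i := by
  simp only [exchange_apply, Prod.ext_iff, funext_iff, ← forall_and, Finset.piecewise]
  refine forall_congr' fun i ↦ ?_
  by_cases hi : i ∈ S <;> simp [hi]

lemma prod_swap_add_id_eq_sum_exchange {R : Type*} [CommSemiring R] [Fintype ι] [DecidableEq κ]
    (p q : (ι → κ) × (ι → κ)) :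
    ∏ i, ((if p.2 i = q.1 i ∧ p.1 i = q.2 i then (1 : R) else 0) +
        (if p.1 i = q.1 i ∧ p.2 i = q.2 i then 1 else 0)) =
      ∑ S : Finset ι, if exchange S p = q then 1 else 0 := by
  simp only [Finset.prod_add, Finset.powerset_univ, Finset.prod_boole, exchange_eq_iff,
    ite_zero_mul_ite_zero, Finset.mem_sdiff, Finset.mem_univ, true_and, one_mul]

end Exchange

lemma re_sum_mul_star_comp_perm_le {κ : Type*} [Fintype κ] (σ : Equiv.Perm κ) (F : κ → ℂ) :
    (∑ p, F p * star (F (σ p))).re ≤ ∑ p, Complex.normSq (F p) := by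
  have re_mul_star_le (z w : ℂ) :
      (z * star w).re ≤ (Complex.normSq z + Complex.normSq w) / 2 := by
    have := Complex.normSq_nonneg (z - w)
    rw [Complex.normSq_sub] at this
    rw [Complex.star_def]
    linarith
  calc (∑ p, F p * star (F (σ p))).re
    _ = ∑ p, (F p * star (F (σ p))).re := Complex.re_sum _ _
    _ ≤ ∑ p, (Complex.normSq (F p) + Complex.normSq (F (σ p))) / 2 :=
      Finset.sum_le_sum fun p _ ↦ re_mul_star_le _ _
    _ = ∑ p, Complex.normSq (F p) := by
      rw [← Finset.sum_div, Finset.sum_add_distrib,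
        Equiv.sum_comp σ fun p ↦ Complex.normSq (F p)]
      ring

section Purity

variable {ι : Type*} [Fintype ι] [DecidableEq ι]

lemma trace_reducedMatrixUnit_bipartitePow_antisymIsometry_mul (p q : (ι → Fin 3) × (ι → Fin 3)) :
    trace (reducedMatrixUnit (bipartitePow ι antisymIsometry) p.1 q.1 *
        reducedMatrixUnit (bipartitePow ι antisymIsometry) p.2 q.2) =
      (1 / 4) ^ Fintype.card ι * ∑ S : Finset ι, if exchange S p = q then 1 else 0 := by
  simp only [trace_reducedMatrixUnit_bipartitePow_mul,
    trace_reducedMatrixUnit_antisymIsometry_mul, Finset.prod_mul_distrib, Finset.prod_const,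
    Finset.card_univ, prod_swap_add_id_eq_sum_exchange]

lemma purity_bipartitePow_antisymIsometry (c : (ι → Fin 3) → ℂ) :
    purity (bipartitePow ι antisymIsometry *ᵥ c) =
      (1 / 4) ^ Fintype.card ι * ∑ S : Finset ι, ∑ p : (ι → Fin 3) × (ι → Fin 3),
        c p.1 * c p.2 * star (c (exchange S p).1 * c (exchange S p).2) := by
  simp only [purity_mulVec, trace_reducedMatrixUnit_bipartitePow_antisymIsometry_mul,
    Finset.mul_sum, mul_ite, mul_one, mul_zero]
  conv_rhs => rw [Finset.sum_comm]
  refine Finset.sum_congr rfl fun p _ ↦ ?_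
  rw [Finset.sum_comm]
  simp only [Finset.sum_ite_eq, Finset.mem_univ, if_true]
  exact Finset.sum_congr rfl fun S _ ↦ by ring

lemma re_purity_bipartitePow_antisymIsometry_le (c : (ι → Fin 3) → ℂ) :
    (purity (bipartitePow ι antisymIsometry *ᵥ c)).re ≤
      (1 / 2) ^ Fintype.card ι * (∑ k, Complex.normSq (c k)) ^ 2 := by
  have norm_tensor_self : ∑ p : (ι → Fin 3) × (ι → Fin 3), Complex.normSq (c p.1 * c p.2) =
      (∑ k, Complex.normSq (c k)) ^ 2 := by
    simp only [map_mul, sq, Finset.sum_mul_sum, Fintype.sum_prod_type]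
  have four_inv_pow_eq_ofReal : (1 / 4 : ℂ) ^ Fintype.card ι =
      (((1 / 4) ^ Fintype.card ι : ℝ) : ℂ) := by
    push_cast
    rfl
  rw [purity_bipartitePow_antisymIsometry, four_inv_pow_eq_ofReal, Complex.re_ofReal_mul,
    Complex.re_sum]
  calc (1 / 4 : ℝ) ^ Fintype.card ι * ∑ S : Finset ι, (∑ p : (ι → Fin 3) × (ι → Fin 3),
        c p.1 * c p.2 * star (c (exchange S p).1 * c (exchange S p).2)).re
    _ ≤ (1 / 4) ^ Fintype.card ι * ∑ _S : Finset ι, (∑ k, Complex.normSq (c k)) ^ 2 := by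
      gcongr with S
      rw [← norm_tensor_self]
      exact re_sum_mul_star_comp_perm_le (exchange S) fun p ↦ c p.1 * c p.2
    _ = (1 / 2) ^ Fintype.card ι * (∑ k, Complex.normSq (c k)) ^ 2 := by
      rw [Finset.sum_const, Finset.card_univ, Fintype.card_finset, nsmul_eq_mul, ← mul_assoc]
      push_cast
      rw [← mul_pow]
      norm_num

lemma purity_bipartitePow_antisymIsometry_single (k : ι → Fin 3) :
    purity (bipartitePow ι antisymIsometry *ᵥ Pi.single k 1) = (1 / 2) ^ Fintype.card ι := by
  have overlap_eq_one (S : Finset ι) : ∑ p : (ι → Fin 3) × (ι → Fin 3),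
      (Pi.single k 1 : (ι → Fin 3) → ℂ) p.1 * (Pi.single k 1 : (ι → Fin 3) → ℂ) p.2 *
        star ((Pi.single k 1 : (ι → Fin 3) → ℂ) (exchange S p).1 *
          (Pi.single k 1 : (ι → Fin 3) → ℂ) (exchange S p).2) = 1 := by
    rw [Fintype.sum_eq_single (k, k)]
    · simp [exchange_apply, Finset.piecewise_same]
    · rintro ⟨k₁, k₂⟩ hne
      obtain h | h : k₁ ≠ k ∨ k₂ ≠ k := by simpa [← not_and_or] using hne
      all_goals simp [h]
  simp only [purity_bipartitePow_antisymIsometry, overlap_eq_one, Finset.sum_const,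
    Finset.card_univ, Fintype.card_finset, nsmul_eq_mul, mul_one]
  push_cast
  rw [← mul_pow]
  norm_num

end Purity

/-- For every integer `n ≥ 1`, the maximum of `tr(ψ_{A^n}²)` over unit
vectors `ψ` in the range of `(P₂^{(3)})^{⊗n}` equals `2^{-n}`: every such `ψ` satisfies
`tr(ψ_{A^n}²) ≤ 2^{-n}`, and some such `ψ` attains equality. -/
theorem purity_antisym_d3 (n : ℕ) (hn : 1 ≤ n) :
    (∀ ψ : (Fin n → Fin 3) × (Fin n → Fin 3) → ℂ,
      (∑ v, Complex.normSq (ψ v) = 1) → (asymPow 3 n).mulVec ψ = ψ →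
      (Matrix.trace (ptraceSnd (Matrix.vecMulVec ψ (star ψ)) *
          ptraceSnd (Matrix.vecMulVec ψ (star ψ)))).re ≤ (1 / 2 : ℝ) ^ n) ∧
    (∃ ψ : (Fin n → Fin 3) × (Fin n → Fin 3) → ℂ,
      (∑ v, Complex.normSq (ψ v) = 1) ∧ (asymPow 3 n).mulVec ψ = ψ ∧
      (Matrix.trace (ptraceSnd (Matrix.vecMulVec ψ (star ψ)) *
          ptraceSnd (Matrix.vecMulVec ψ (star ψ)))).re = (1 / 2 : ℝ) ^ n) := by
  set V := bipartitePow (Fin n) antisymIsometry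
  have hV : Vᴴ * V = 1 := conjTranspose_bipartitePow_mul_self conjTranspose_antisymIsometry_mul_self
  rw [asymPow_three_eq_mul_conjTranspose]
  refine ⟨fun ψ hψ hrange ↦ ?_, V *ᵥ Pi.single 0 1, ?_, ?_, ?_⟩
  · obtain ⟨c, rfl⟩ : ∃ c, V *ᵥ c = ψ := ⟨Vᴴ *ᵥ ψ, by rwa [mulVec_mulVec]⟩
    rw [sum_normSq_mulVec_of_conjTranspose_mul_self hV] at hψ
    refine (re_purity_bipartitePow_antisymIsometry_le c).trans_eq ?_
    rw [hψ, Fintype.card_fin, one_pow, mul_one]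
  · rw [sum_normSq_mulVec_of_conjTranspose_mul_self hV]
    simp [Pi.single_apply, apply_ite]
  · rw [mulVec_mulVec, Matrix.mul_assoc, hV, Matrix.mul_one]
  · refine (congrArg Complex.re (purity_bipartitePow_antisymIsometry_single 0)).trans ?_
    rw [Fintype.card_fin, ← Complex.ofReal_re ((1 / 2 : ℝ) ^ n)]
    push_cast
    rfl

end
end

section
/- For every integer d ≥ 2, the entanglement of formation of the antisymmetric state satisfies E_F(α_d) = 1 (with the bipartition being the two tensor factors of ℂ^d ⊗ ℂ^d). -/
open scoped BigOperators
open Classical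
open scoped ComplexOrder

noncomputable section

/-! The coefficient matrix `M` of an antisymmetric unit vector is skew-symmetric. If `v` is a unit
vector and `w = Mᵀ v̄`, then `M` has inner product `2 ‖w‖²` with the wedge `v wᵀ - w vᵀ`, whose
squared norm is at most `2 ‖w‖²`; hence `2 ‖w‖² ≤ ‖M‖² = 1`. So no eigenvalue of the reduced state
`M Mᴴ` exceeds `1/2`, and every antisymmetric pure state has at least one bit of entanglement. All
members of an ensemble for `α_d` lie in its range and are therefore antisymmetric, which bounds
`E_F` from below. Conversely, `α_d` is the uniform mixture of the singlets `(|s t⟩ - |t s⟩)/√2`,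
whose reduced states are maximally mixed on a two-dimensional subspace. -/

section LinearAlgebra

open Matrix

section Skew

variable {n R : Type*} [CommRing R] {M : Matrix n n R}

/-- The coefficient matrix `v wᵀ - w vᵀ` of the antisymmetric tensor `v ⊗ w - w ⊗ v`. -/
def wedgeMatrix (v w : n → R) : Matrix n n R :=
  vecMulVec v w - vecMulVec w v

variable [StarRing R]

theorem conjTranspose_wedgeMatrix (v w : n → R) :
    (wedgeMatrix v w)ᴴ = wedgeMatrix (star w) (star v) := by
  simp only [wedgeMatrix, conjTranspose_sub, conjTranspose_vecMulVec]

variable [Fintype n]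

theorem trace_wedgeMatrix_mul_conjTranspose (v w : n → R) :
    (wedgeMatrix v w * (wedgeMatrix v w)ᴴ).trace =
      2 * ((v ⬝ᵥ star v) * (w ⬝ᵥ star w) - star (v ⬝ᵥ star w) * (v ⬝ᵥ star w)) := by
  rw [conjTranspose_wedgeMatrix, ← dotProduct_star w v]
  simp only [wedgeMatrix, sub_mul, mul_sub, vecMulVec_mul_vecMulVec, trace_sub, trace_vecMulVec,
    dotProduct_smul, smul_eq_mul]
  ring

theorem trace_mul_conjTranspose_wedgeMatrix_of_transpose_eq_neg (hM : Mᵀ = -M) (v w : n → R) :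
    (M * (wedgeMatrix v w)ᴴ).trace = 2 * (star v ᵥ* M ⬝ᵥ star w) := by
  have mulVec_star : M *ᵥ star v = -(star v ᵥ* M) := by
    rw [← mulVec_transpose, hM, neg_mulVec, neg_neg]
  rw [conjTranspose_wedgeMatrix, wedgeMatrix, mul_sub, mul_vecMulVec, mul_vecMulVec, mulVec_star,
    trace_sub, trace_vecMulVec, trace_vecMulVec, neg_dotProduct, dotProduct_comm,
    dotProduct_mulVec]
  ring

theorem two_mul_dotProduct_mulVec_le_trace_of_transpose_eq_neg [PartialOrder R] [StarOrderedRing R]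
    (hM : Mᵀ = -M) {v : n → R} (hv : v ⬝ᵥ star v = 1) :
    2 * (star v ⬝ᵥ (M * Mᴴ) *ᵥ v) ≤ (M * Mᴴ).trace := by
  set w := star v ᵥ* M with hw
  set K := wedgeMatrix v w
  set q := w ⬝ᵥ star w with hq
  set r := v ⬝ᵥ star w
  have quadratic_form : star v ⬝ᵥ (M * Mᴴ) *ᵥ v = q := by
    rw [hq, hw, star_vecMul, star_star, ← mulVec_mulVec, dotProduct_mulVec]
  have trace_MK : (M * Kᴴ).trace = 2 * q :=
    trace_mul_conjTranspose_wedgeMatrix_of_transpose_eq_neg hM v w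
  have trace_KM : (K * Mᴴ).trace = 2 * q := by
    rw [← conjTranspose_conjTranspose K, ← conjTranspose_mul, trace_conjTranspose, trace_MK,
      star_mul', star_ofNat, hq, ← dotProduct_star]
  have trace_KK : (K * Kᴴ).trace = 2 * (q - star r * r) := by
    rw [trace_wedgeMatrix_mul_conjTranspose, hv, one_mul]
  have expansion : ((M - K) * (M - K)ᴴ).trace =
      (M * Mᴴ).trace - (2 * q + (star r * r + star r * r)) := by
    rw [conjTranspose_sub, sub_mul, mul_sub, mul_sub, trace_sub, trace_sub, trace_sub, trace_MK,
      trace_KM, trace_KK]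
    ring
  have deviation_nonneg : 0 ≤ ((M - K) * (M - K)ᴴ).trace :=
    (posSemidef_self_mul_conjTranspose (M - K)).trace_nonneg
  have overlap_nonneg : 0 ≤ star r * r := star_mul_self_nonneg r
  calc
    2 * (star v ⬝ᵥ (M * Mᴴ) *ᵥ v) = 2 * q := by rw [quadratic_form]
    _ ≤ 2 * q + (star r * r + star r * r) :=
      le_add_of_nonneg_right (add_nonneg overlap_nonneg overlap_nonneg)
    _ ≤ (M * Mᴴ).trace := sub_nonneg.1 (expansion ▸ deviation_nonneg)

end Skew

theorem sum_vecMulVec_col_star {m n R : Type*} [Fintype n] [NonUnitalNonAssocSemiring R]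
    [StarRing R] (A : Matrix m n R) : ∑ j, vecMulVec (A.col j) (star (A.col j)) = A * Aᴴ := by
  ext i k
  simp [Matrix.sum_apply, vecMulVec_apply, mul_apply]

variable {n 𝕜 : Type*} [Fintype n] [DecidableEq n] [RCLike 𝕜]

theorem two_mul_eigenvalues_le_trace_of_transpose_eq_neg {M : Matrix n n 𝕜} (hM : Mᵀ = -M)
    (h : (M * Mᴴ).IsHermitian) (i : n) : 2 * h.eigenvalues i ≤ RCLike.re (M * Mᴴ).trace := by
  have unit : (h.eigenvectorBasis i).ofLp ⬝ᵥ star (h.eigenvectorBasis i).ofLp = 1 := by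
    rw [← EuclideanSpace.inner_eq_star_dotProduct]
    simp
  have := RCLike.re_le_re (two_mul_dotProduct_mulVec_le_trace_of_transpose_eq_neg hM unit)
  rw [h.eigenvalues_eq]
  simpa using this

theorem eigenvalues_eq_zero_or_eq_of_mul_self_eq_smul {A : Matrix n n 𝕜} (hA : A.IsHermitian)
    {c : ℝ} (hc : A * A = c • A) (i : n) : hA.eigenvalues i = 0 ∨ hA.eigenvalues i = c := by
  have : Nonempty n := ⟨i⟩
  let P : Polynomial ℝ := Polynomial.X * (Polynomial.X - Polynomial.C c)
  have annihilates : Polynomial.aeval A P = 0 := by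
    simp [P, mul_sub, hc, Algebra.algebraMap_eq_smul_one]
  have root := spectrum.subset_polynomial_aeval A P ⟨_, hA.eigenvalues_mem_spectrum_real i, rfl⟩
  rw [annihilates, spectrum.zero_eq] at root
  simpa [P, sub_eq_zero] using root

end LinearAlgebra

section Entropy

open Matrix

variable {ι : Type*} [Fintype ι] [DecidableEq ι] {ρ : Matrix ι ι ℂ} {c : ℝ}

theorem sum_eigenvalues_eq_one (h : ρ.IsHermitian) (htr : ρ.trace = 1) :
    ∑ i, h.eigenvalues i = 1 := by
  have trace_eq := h.trace_eq_sum_eigenvalues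
  rw [htr] at trace_eq
  apply Complex.ofReal_injective
  simpa using trace_eq.symm

theorem neg_logb_le_vnEntropy (hρ : ρ.PosSemidef) (htr : ρ.trace = 1)
    (hc : ∀ i, hρ.isHermitian.eigenvalues i ≤ c) : -Real.logb 2 c ≤ vnEntropy ρ := by
  have term_le (i : ι) : hρ.isHermitian.eigenvalues i * Real.logb 2 (hρ.isHermitian.eigenvalues i) ≤
      hρ.isHermitian.eigenvalues i * Real.logb 2 c := by
    rcases (hρ.eigenvalues_nonneg i).eq_or_lt with h0 | hpos
    · simp [← h0]
    · exact mul_le_mul_of_nonneg_left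
        (Real.logb_le_logb_of_le one_lt_two hpos (hc i)) hpos.le
  rw [vnEntropy, dif_pos hρ.isHermitian, neg_le_neg_iff]
  calc
    _ ≤ ∑ i, hρ.isHermitian.eigenvalues i * Real.logb 2 c := Finset.sum_le_sum fun i _ => term_le i
    _ = Real.logb 2 c := by
      rw [← Finset.sum_mul, sum_eigenvalues_eq_one hρ.isHermitian htr, one_mul]

theorem vnEntropy_eq_neg_logb_of_mul_self_eq_smul (hρ : ρ.IsHermitian) (htr : ρ.trace = 1)
    (hc : ρ * ρ = c • ρ) : vnEntropy ρ = -Real.logb 2 c := by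
  have term_eq (i : ι) : hρ.eigenvalues i * Real.logb 2 (hρ.eigenvalues i) =
      hρ.eigenvalues i * Real.logb 2 c := by
    rcases eigenvalues_eq_zero_or_eq_of_mul_self_eq_smul hρ hc i with h | h <;> simp [h]
  rw [vnEntropy, dif_pos hρ, Finset.sum_congr rfl fun i _ => term_eq i, ← Finset.sum_mul,
    sum_eigenvalues_eq_one hρ htr, one_mul]

end Entropy

section PureStates

open Matrix

variable {α β : Type*} [Fintype β]

/-- The matrix of coefficients `M a b = ψ (a, b)` of a bipartite vector in the product basis. -/
def coeffMatrix (ψ : α × β → ℂ) : Matrix α β ℂ :=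
  Matrix.of (Function.curry ψ)

/-- The entanglement entropy (in bits) of a bipartite vector: the entropy of its reduced state on
the first factor. -/
def entanglementEntropy [Fintype α] [DecidableEq α] (ψ : α × β → ℂ) : ℝ :=
  vnEntropy (ptraceSnd (vecMulVec ψ (star ψ)))

theorem ptraceSnd_vecMulVec_star (ψ : α × β → ℂ) :
    ptraceSnd (vecMulVec ψ (star ψ)) = coeffMatrix ψ * (coeffMatrix ψ)ᴴ := by
  ext a b
  simp [ptraceSnd, coeffMatrix, vecMulVec_apply, mul_apply]

theorem trace_coeffMatrix_mul_conjTranspose [Fintype α] (ψ : α × β → ℂ) :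
    (coeffMatrix ψ * (coeffMatrix ψ)ᴴ).trace = ((∑ x, Complex.normSq (ψ x) : ℝ) : ℂ) := by
  simp [trace, mul_apply, coeffMatrix, Fintype.sum_prod_type, Complex.mul_conj]

theorem one_le_entanglementEntropy_of_antisymm [DecidableEq β] {ψ : β × β → ℂ}
    (hψ : ∑ x, Complex.normSq (ψ x) = 1) (hanti : ∀ x, ψ x.swap = -ψ x) :
    1 ≤ entanglementEntropy ψ := by
  set M := coeffMatrix ψ
  have skew : Mᵀ = -M := by
    ext a b
    exact hanti (a, b)
  have trace_eq_one : (M * Mᴴ).trace = 1 := by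
    rw [trace_coeffMatrix_mul_conjTranspose, hψ, Complex.ofReal_one]
  have psd := posSemidef_self_mul_conjTranspose M
  have eigenvalues_le (i : β) : psd.isHermitian.eigenvalues i ≤ 2⁻¹ := by
    have := two_mul_eigenvalues_le_trace_of_transpose_eq_neg skew psd.isHermitian i
    rw [trace_eq_one, RCLike.one_re] at this
    linarith
  have := neg_logb_le_vnEntropy psd trace_eq_one eigenvalues_le
  rwa [Real.logb_inv, neg_neg, Real.logb_self_eq_one one_lt_two,
    ← ptraceSnd_vecMulVec_star] at this

end PureStates

section Ensembles

open Matrix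

/-- The unit vectors `ψ i` with weights `p i` form a pure-state ensemble for `ρ`. As in `EoF`, the
vectors of weight zero are required to be normalized as well. -/
structure IsPureEnsemble {κ X : Type*} [Fintype κ] [Fintype X] (p : κ → ℝ) (ψ : κ → X → ℂ)
    (ρ : Matrix X X ℂ) : Prop where
  weight_nonneg (i : κ) : 0 ≤ p i
  sum_weight : ∑ i, p i = 1
  normalized (i : κ) : ∑ x, Complex.normSq (ψ i x) = 1
  sum_smul_vecMulVec : ∑ i, p i • vecMulVec (ψ i) (star (ψ i)) = ρ

namespace IsPureEnsemble

variable {κ X : Type*} [Fintype κ] [Fintype X] {p : κ → ℝ} {ψ : κ → X → ℂ} {ρ : Matrix X X ℂ}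

theorem comp_equiv {κ' : Type*} [Fintype κ'] (h : IsPureEnsemble p ψ ρ) (e : κ' ≃ κ) :
    IsPureEnsemble (p ∘ e) (ψ ∘ e) ρ where
  weight_nonneg i := h.weight_nonneg (e i)
  sum_weight := (e.sum_comp p).trans h.sum_weight
  normalized i := h.normalized (e i)
  sum_smul_vecMulVec :=
    (e.sum_comp fun i => p i • vecMulVec (ψ i) (star (ψ i))).trans h.sum_smul_vecMulVec

theorem star_dotProduct_eq_zero (h : IsPureEnsemble p ψ ρ) {v : X → ℂ} (hv : ρ *ᵥ v = 0) {i : κ}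
    (hi : p i ≠ 0) : star v ⬝ᵥ ψ i = 0 := by
  have expectation : ((∑ j, p j * Complex.normSq (star v ⬝ᵥ ψ j) : ℝ) : ℂ) =
      star v ⬝ᵥ ρ *ᵥ v := by
    have conj_dotProduct (j : κ) : star (ψ j) ⬝ᵥ v = star (star v ⬝ᵥ ψ j) := star_dotProduct _ _
    simp [← h.sum_smul_vecMulVec, sum_mulVec, dotProduct_sum, smul_mulVec, vecMulVec_mulVec,
      conj_dotProduct, Complex.normSq_eq_conj_mul_self]
  have sum_eq_zero : ∑ j, p j * Complex.normSq (star v ⬝ᵥ ψ j) = 0 := by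
    rw [hv, dotProduct_zero] at expectation
    exact_mod_cast expectation
  have term_eq_zero := (Finset.sum_eq_zero_iff_of_nonneg fun j _ =>
    mul_nonneg (h.weight_nonneg j) (Complex.normSq_nonneg _)).1 sum_eq_zero i (Finset.mem_univ i)
  exact Complex.normSq_eq_zero.1 ((mul_eq_zero.1 term_eq_zero).resolve_left hi)

end IsPureEnsemble

/-- The orthogonality condition says that `φ` lies in the range of `ρ`. -/
theorem IsPureEnsemble.EoF_eq_of_forall_le {κ α β : Type*} [Fintype κ] [Fintype α]
    [DecidableEq α] [Fintype β] [DecidableEq β] {p : κ → ℝ} {ψ : κ → α × β → ℂ}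
    {ρ : Matrix (α × β) (α × β) ℂ} {c : ℝ}
    (h : IsPureEnsemble p ψ ρ) (hψ : ∀ i, entanglementEntropy (ψ i) = c)
    (hmin : ∀ φ : α × β → ℂ, ∑ x, Complex.normSq (φ x) = 1 →
      (∀ v, ρ *ᵥ v = 0 → star v ⬝ᵥ φ = 0) → c ≤ entanglementEntropy φ) :
    EoF ρ = c := by
  refine IsLeast.csInf_eq ⟨?_, ?_⟩
  · have h' := h.comp_equiv (Fintype.equivFin κ).symm
    refine ⟨_, _, _, h'.weight_nonneg, h'.sum_weight, h'.normalized, h'.sum_smul_vecMulVec, ?_⟩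
    change c = ∑ i, _ * entanglementEntropy _
    calc
      c = (∑ i, (p ∘ (Fintype.equivFin κ).symm) i) * c := by rw [h'.sum_weight, one_mul]
      _ = _ := by simp only [Finset.sum_mul, Function.comp_apply, hψ]
  · rintro _ ⟨k, p', φ, hp, hsum, hnorm, hρ, rfl⟩
    have h' : IsPureEnsemble p' φ ρ := ⟨hp, hsum, hnorm, hρ⟩
    calc
      c = ∑ i, p' i * c := by rw [← Finset.sum_mul, hsum, one_mul]
      _ ≤ ∑ i, p' i * entanglementEntropy (φ i) := Finset.sum_le_sum fun i _ => by
        by_cases hi : p' i = 0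
        · simp [hi]
        · exact mul_le_mul_of_nonneg_left
            (hmin _ (hnorm i) fun v hv => h'.star_dotProduct_eq_zero hv hi) (hp i)

end Ensembles

section AntisymmetricState

open Matrix

variable {d : ℕ}

theorem asymProj_eq_smul_one_sub_permMatrix (d : ℕ) :
    asymProj d =
      (1 / 2 : ℂ) • (1 - Equiv.Perm.permMatrix ℂ (Equiv.prodComm (Fin d) (Fin d))) := by
  ext x y
  have swap_eq : (x.swap = y) ↔ x.1 = y.2 ∧ x.2 = y.1 := by
    rw [Prod.ext_iff, Prod.fst_swap, Prod.snd_swap, and_comm]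
  simp [asymProj, one_apply, ← Prod.ext_iff, Equiv.toPEquiv_apply, PEquiv.toMatrix_apply, swap_eq]

theorem isHermitian_asymProj (d : ℕ) : (asymProj d).IsHermitian := by
  have swap_inv : (Equiv.prodComm (Fin d) (Fin d))⁻¹ = Equiv.prodComm (Fin d) (Fin d) := rfl
  simp [IsHermitian, asymProj_eq_smul_one_sub_permMatrix, conjTranspose_smul, swap_inv]

theorem asymProj_mul_self (d : ℕ) : asymProj d * asymProj d = asymProj d := by
  have swap_mul_swap : Equiv.Perm.permMatrix ℂ (Equiv.prodComm (Fin d) (Fin d)) *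
      Equiv.Perm.permMatrix ℂ (Equiv.prodComm (Fin d) (Fin d)) = 1 := by
    rw [← permMatrix_mul, ← permMatrix_one]
    rfl
  rw [asymProj_eq_smul_one_sub_permMatrix, smul_mul_smul, sub_mul, mul_sub, mul_sub, one_mul,
    one_mul, mul_one, swap_mul_swap]
  module

theorem col_asymProj_swap (x : Fin d × Fin d) :
    (asymProj d).col x.swap = -(asymProj d).col x := by
  ext y
  simp only [asymProj, col_apply, of_apply, Prod.fst_swap, Prod.snd_swap, Pi.neg_apply]
  ring

theorem col_asymProj_eq_zero {x : Fin d × Fin d} (hx : x.1 = x.2) : (asymProj d).col x = 0 := by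
  ext y
  simp [asymProj, hx]

theorem antisymm_of_forall_antisymState_mulVec_eq_zero {φ : Fin d × Fin d → ℂ}
    (hφ : ∀ v, antisymState d *ᵥ v = 0 → star v ⬝ᵥ φ = 0) (x : Fin d × Fin d) :
    φ x.swap = -φ x := by
  have kernel : antisymState d *ᵥ (Pi.single x 1 + Pi.single x.swap 1) = 0 := by
    rw [antisymState, smul_mulVec, mulVec_add, mulVec_single_one, mulVec_single_one,
      col_asymProj_swap, add_neg_cancel, smul_zero]
  have orthogonal := hφ _ kernel
  rw [star_add, ← Pi.single_star, ← Pi.single_star, star_one, add_dotProduct,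
    single_one_dotProduct, single_one_dotProduct] at orthogonal
  exact eq_neg_of_add_eq_zero_right orthogonal

/-- The normalized antisymmetrization `√2 P₂ |s t⟩ = (|s t⟩ - |t s⟩) / √2` of the product basis
vector indexed by `q = (s, t)`; it vanishes when `s = t`. -/
def singlet (q : Fin d × Fin d) : Fin d × Fin d → ℂ :=
  √2 • (asymProj d).col q

theorem coeffMatrix_singlet (s t : Fin d) :
    coeffMatrix (singlet (s, t)) = (√2 / 2) • (single s t 1 - single t s 1) := by
  ext a b
  simp only [coeffMatrix, singlet, asymProj, of_apply, Function.curry_apply, Pi.smul_apply,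
    col_apply, Complex.real_smul, Matrix.smul_apply, Matrix.sub_apply, single_apply,
    eq_comm (a := s), eq_comm (a := t), Complex.ofReal_div, Complex.ofReal_ofNat]
  ring

theorem coeffMatrix_singlet_mul_conjTranspose {s t : Fin d} (hst : s ≠ t) :
    coeffMatrix (singlet (s, t)) * (coeffMatrix (singlet (s, t)))ᴴ =
      (1 / 2 : ℝ) • (single s s 1 + single t t 1) := by
  have sq : √2 / 2 * (√2 / 2) = 1 / 2 := by
    rw [div_mul_div_comm, Real.mul_self_sqrt zero_le_two]
    norm_num
  rw [coeffMatrix_singlet, conjTranspose_smul, smul_mul_smul, star_trivial, sq]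
  simp [sub_mul, mul_sub, hst, hst.symm, single_mul_single_of_ne]

theorem trace_coeffMatrix_singlet_mul_conjTranspose {s t : Fin d} (hst : s ≠ t) :
    (coeffMatrix (singlet (s, t)) * (coeffMatrix (singlet (s, t)))ᴴ).trace = 1 := by
  rw [coeffMatrix_singlet_mul_conjTranspose hst]
  norm_num

theorem sum_normSq_singlet {q : Fin d × Fin d} (hq : q.1 ≠ q.2) :
    ∑ x, Complex.normSq (singlet q x) = 1 := by
  have trace_eq := trace_coeffMatrix_singlet_mul_conjTranspose hq
  rw [trace_coeffMatrix_mul_conjTranspose] at trace_eq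
  exact_mod_cast trace_eq

theorem entanglementEntropy_singlet {q : Fin d × Fin d} (hq : q.1 ≠ q.2) :
    entanglementEntropy (singlet q) = 1 := by
  have flat : (coeffMatrix (singlet q) * (coeffMatrix (singlet q))ᴴ) *
      (coeffMatrix (singlet q) * (coeffMatrix (singlet q))ᴴ) =
      (2⁻¹ : ℝ) • (coeffMatrix (singlet q) * (coeffMatrix (singlet q))ᴴ) := by
    rw [coeffMatrix_singlet_mul_conjTranspose hq]
    simp [add_mul, mul_add, hq, hq.symm, single_mul_single_of_ne]
  rw [entanglementEntropy, ptraceSnd_vecMulVec_star,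
    vnEntropy_eq_neg_logb_of_mul_self_eq_smul (isHermitian_mul_conjTranspose_self _)
      (trace_coeffMatrix_singlet_mul_conjTranspose hq) flat,
    Real.logb_inv, neg_neg, Real.logb_self_eq_one one_lt_two]

theorem sum_vecMulVec_singlet (d : ℕ) :
    ∑ q : {q : Fin d × Fin d // q.1 ≠ q.2}, vecMulVec (singlet q.1) (star (singlet q.1)) =
      (2 : ℝ) • asymProj d := by
  have singlet_diag (q : {q : Fin d × Fin d // ¬q.1 ≠ q.2}) :
      vecMulVec (singlet q.1) (star (singlet q.1)) = 0 := by
    rw [singlet, col_asymProj_eq_zero (not_not.1 q.2), smul_zero, zero_vecMulVec]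
  calc
    _ = ∑ q : Fin d × Fin d, vecMulVec (singlet q) (star (singlet q)) := by
      rw [← Fintype.sum_subtype_add_sum_subtype fun q : Fin d × Fin d => q.1 ≠ q.2,
        Finset.sum_eq_zero fun q _ => singlet_diag q, add_zero]
    _ = (2 : ℝ) • (asymProj d * (asymProj d)ᴴ) := by
      have scale (q : Fin d × Fin d) : vecMulVec (singlet q) (star (singlet q)) =
          (2 : ℝ) • vecMulVec ((asymProj d).col q) (star ((asymProj d).col q)) := by
        rw [singlet, star_smul, star_trivial, smul_vecMulVec, vecMulVec_smul, smul_smul,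
          Real.mul_self_sqrt zero_le_two]
      simp only [scale, ← Finset.smul_sum, sum_vecMulVec_col_star]
    _ = (2 : ℝ) • asymProj d := by rw [(isHermitian_asymProj d).eq, asymProj_mul_self]

theorem card_subtype_fst_ne_snd (α : Type*) [Fintype α] [DecidableEq α] :
    Fintype.card {q : α × α // q.1 ≠ q.2} = 2 * (Fintype.card α).choose 2 := by
  have filter_eq : Finset.univ.filter (fun q : α × α => q.1 ≠ q.2) = Finset.univ.offDiag := by
    ext q
    simp
  rw [Fintype.card_subtype, filter_eq, ← Sym2.two_mul_card_image_offDiag, Sym2.card_image_offDiag,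
    Finset.card_univ]

theorem isPureEnsemble_singlet (hd : 2 ≤ d) :
    IsPureEnsemble (fun _ : {q : Fin d × Fin d // q.1 ≠ q.2} => (2 * d.choose 2 : ℝ)⁻¹)
      (fun q => singlet q.1) (antisymState d) where
  weight_nonneg _ := by positivity
  sum_weight := by
    have : (d.choose 2 : ℝ) ≠ 0 := Nat.cast_ne_zero.2 (Nat.choose_pos hd).ne'
    rw [Finset.sum_const, Finset.card_univ, card_subtype_fst_ne_snd, Fintype.card_fin,
      nsmul_eq_mul]
    push_cast
    field_simp
  normalized q := sum_normSq_singlet q.2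
  sum_smul_vecMulVec := by
    rw [← Finset.smul_sum, sum_vecMulVec_singlet, smul_smul, antisymState]
    ext x y
    simp

end AntisymmetricState

/-- For every integer `d ≥ 2`, `E_F(α_d) = 1`. -/
theorem EoF_antisymState (d : ℕ) (hd : 2 ≤ d) :
    EoF (antisymState d) = 1 :=
  (isPureEnsemble_singlet hd).EoF_eq_of_forall_le (fun q => entanglementEntropy_singlet q.2)
    fun _ hφ hrange => one_le_entanglementEntropy_of_antisymm hφ
      (antisymm_of_forall_antisymState_mulVec_eq_zero hrange)

end
end

section
/- For all integers n ≥ 1 and 0 ≤ m ≤ n, the following inequality holds: (−2)^m · 2^{−n} + ∑_{k=0}^{n−1} 2^{k−2n} · ( ∑_{ℓ=0}^{k} (−2)^ℓ · binom(m,ℓ) · binom(n−m, k−ℓ) ) ≤ (3/4)^n, where binom(a,b) := 0 whenever b > a. (This expresses that z = (3/4)^n together with δ_k = 2^{k−2n} for k < n and δ_n = 0 is a feasible point of the dual linear programme.) -/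
open scoped BigOperators
open Classical
open scoped ComplexOrder

noncomputable section

/-! Up to the factor `4 ^ n`, the left-hand side is the value at `2` of the degree-`n` polynomial
`(1 - 2 X) ^ m * (1 + X) ^ (n - m)`: the inner sums are its coefficients below the top one, and
`(-2) ^ m` is the top one. That value is `(-3) ^ m * 3 ^ (n - m)`, which is at most `3 ^ n`. -/

section KrawtchoukPoly

open Polynomial

/-- The generating polynomial `(1 + a X) ^ m * (1 + X) ^ r`, whose coefficients at `a = -1` are the
values at `m` of the binary Krawtchouk polynomials of length `m + r`. The inner sums of the dual
constraints are its coefficients at `a = -2`. -/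
def krawtchoukPoly {R : Type*} [CommSemiring R] (a : R) (m r : ℕ) : R[X] :=
  (1 + C a * X) ^ m * (1 + X) ^ r

variable {R : Type*} [CommSemiring R] (a x : R) (m r k : ℕ)

theorem coeff_one_add_C_mul_X_pow : ((1 + C a * X) ^ m).coeff k = a ^ k * m.choose k := by
  have h_comp : (1 + C a * X) ^ m = ((1 + X) ^ m).comp (C a * X) := by simp
  rw [h_comp, comp_C_mul_X_coeff, coeff_one_add_X_pow, mul_comm]

theorem natDegree_one_add_C_mul_X_pow_le : ((1 + C a * X) ^ m).natDegree ≤ m := by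
  compute_degree

theorem natDegree_one_add_X_pow_le : ((1 + X : R[X]) ^ r).natDegree ≤ r := by
  compute_degree

theorem coeff_krawtchoukPoly :
    (krawtchoukPoly a m r).coeff k =
      ∑ l ∈ Finset.range (k + 1), a ^ l * m.choose l * r.choose (k - l) := by
  simp only [krawtchoukPoly, coeff_mul, coeff_one_add_C_mul_X_pow, coeff_one_add_X_pow,
    Finset.Nat.sum_antidiagonal_eq_sum_range_succ_mk]

theorem natDegree_krawtchoukPoly_le : (krawtchoukPoly a m r).natDegree ≤ m + r :=
  natDegree_mul_le_of_le (natDegree_one_add_C_mul_X_pow_le a m) (natDegree_one_add_X_pow_le r)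

theorem coeff_krawtchoukPoly_add : (krawtchoukPoly a m r).coeff (m + r) = a ^ m := by
  rw [krawtchoukPoly, coeff_mul_add_eq_of_natDegree_le (natDegree_one_add_C_mul_X_pow_le a m)
    (natDegree_one_add_X_pow_le r), coeff_one_add_C_mul_X_pow, coeff_one_add_X_pow]
  simp only [Nat.choose_self, Nat.cast_one, mul_one]

theorem eval_krawtchoukPoly : (krawtchoukPoly a m r).eval x = (1 + a * x) ^ m * (1 + x) ^ r := by
  simp [krawtchoukPoly]

theorem sum_coeff_krawtchoukPoly_mul_pow_add :
    ∑ k ∈ Finset.range (m + r), (krawtchoukPoly a m r).coeff k * x ^ k + a ^ m * x ^ (m + r) =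
      (1 + a * x) ^ m * (1 + x) ^ r := by
  rw [← eval_krawtchoukPoly,
    eval_eq_sum_range' (Nat.lt_succ_of_le (natDegree_krawtchoukPoly_le a m r)),
    Finset.sum_range_succ, coeff_krawtchoukPoly_add]

theorem pow_div_pow_add_sum_coeff_krawtchoukPoly {K : Type*} [Field K] (a : K) {x : K}
    (hx : x ≠ 0) (m r : ℕ) :
    a ^ m / x ^ (m + r) +
        ∑ k ∈ Finset.range (m + r), x ^ k / x ^ (2 * (m + r)) * (krawtchoukPoly a m r).coeff k =
      ((1 + a * x) / x ^ 2) ^ m * ((1 + x) / x ^ 2) ^ r := by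
  have h_top : a ^ m / x ^ (m + r) = a ^ m * x ^ (m + r) / x ^ (2 * (m + r)) := by
    rw [two_mul, pow_add x (m + r), mul_div_mul_right _ _ (pow_ne_zero _ hx)]
  have h_lower : ∑ k ∈ Finset.range (m + r),
        x ^ k / x ^ (2 * (m + r)) * (krawtchoukPoly a m r).coeff k =
      (∑ k ∈ Finset.range (m + r), (krawtchoukPoly a m r).coeff k * x ^ k) /
        x ^ (2 * (m + r)) := by
    rw [Finset.sum_div]
    exact Finset.sum_congr rfl fun k _ => by ring
  rw [h_top, h_lower, add_comm, ← add_div, sum_coeff_krawtchoukPoly_mul_pow_add, div_pow, div_pow,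
    div_mul_div_comm, ← pow_add, ← pow_mul]

end KrawtchoukPoly

/-- the combinatorial inequality expressing that `z = (3/4)^n`, together
with `δ_k = 2^{k-2n}` for `k < n` and `δ_n = 0`, is dual feasible. -/
theorem dual_feasible_inequality (n m : ℕ) (hn : 1 ≤ n) (hm : m ≤ n) :
    (-2 : ℝ) ^ m / 2 ^ n +
      ∑ k ∈ Finset.range n, ((2 : ℝ) ^ k / 2 ^ (2 * n)) *
        (∑ l ∈ Finset.range (k + 1),
          (-2 : ℝ) ^ l * (Nat.choose m l) * (Nat.choose (n - m) (k - l)))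
      ≤ (3 / 4 : ℝ) ^ n := by
  obtain ⟨r, rfl⟩ := Nat.exists_eq_add_of_le hm
  simp only [Nat.add_sub_cancel_left, ← coeff_krawtchoukPoly]
  calc _ = ((1 + -2 * 2) / 2 ^ 2 : ℝ) ^ m * ((1 + 2) / 2 ^ 2) ^ r :=
        pow_div_pow_add_sum_coeff_krawtchoukPoly (-2) two_ne_zero m r
    _ = (-(3 / 4)) ^ m * (3 / 4) ^ r := by norm_num
    _ ≤ |(-(3 / 4)) ^ m * (3 / 4) ^ r| := le_abs_self _
    _ = (3 / 4) ^ (m + r) := by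
      rw [abs_mul, abs_pow, abs_pow, abs_neg, ← pow_add, abs_of_pos (by norm_num)]

end
end
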